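/- For all integers n ≥ 0, α ≥ 0, β ≥ 0, every j ∈ {0, 2, 3, 4} and every k ∈ {0, 1, 3, 4, 5, 6}, the number of (8,16)-regular overpartitions satisfies both p̄_{8,16}( 8 · 5^{2α+1} · 7^{2β} · (5n + j) + 7 · 5^{2α+1} · 7^{2β} ) ≡ 0 (mod 16) and p̄_{8,16}( 8 · 5^{2α} · 7^{2β+1} · (7n + k) + 5 · 5^{2α} · 7^{2β+1} ) ≡ 0 (mod 16). -/

import Mathlib

/-- The number of `(j,k)`-regular overpartitions of `n`: pairs `(λ, μ)` where `λ` is a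
partition of some `m ≤ n` into distinct parts, `μ` is a partition of `n - m`, and no part
of `λ` or `μ` is congruent to `j` modulo `k`. -/
def regularOverpartitions (j k n : ℕ) : ℕ :=
  ∑ m ∈ Finset.range (n + 1),
    ((Nat.Partition.distincts m).filter (fun lam => ∀ i ∈ lam.parts, i % k ≠ j)).card *
    ((Finset.univ : Finset (Nat.Partition (n - m))).filter
      (fun mu => ∀ i ∈ mu.parts, i % k ≠ j)).card

/-!
Write `P` and `W` for the generating functions of overpartitions whose parts are, respectively
are not, allowed, and `s = ∑_{k ≥ 1} (-1)ᵏ q^(k²)`. Gauss's identity gives `P · W · (1 + 2s) = 1`.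
Modulo 2 the factors `1 + qⁱ` and `1 - qⁱ` agree, so `W ≡ 1`, whence `W⁸ ≡ 1` modulo 16.
Since `(1 + 2s)(1 - 2s + 4s² - 8s³) = 1 - 16s⁴` and `s(q)² ≡ s(q²)` modulo 2,
`P ≡ W⁷ (1 - 2s + 4s²) - 8 s(q) s(q²)` modulo 16.
The forbidden parts are multiples of 4 and squares are 0 or 1 modulo 4, so the first term has no
exponent `≡ 3` modulo 4, while every exponent of the second is of the form `a² + 2b²`. Finally, a
prime modulo which `-2` is not a square, such as 5 or 7, divides `a² + 2b²` to an even power.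
-/

open Finset Filter Topology PowerSeries
open scoped PowerSeries.WithPiTopology

section ShanksIdentity

variable {R : Type*} [CommRing R]

/-- The product `∏_{i ≤ a} (1 + yⁱ) · ∏_{b < i ≤ n} (1 - yⁱ)`. -/
def mixedProd (y : R) (a b n : ℕ) : R :=
  (∏ i ∈ range a, (1 + y ^ (i + 1))) * ∏ i ∈ Ico b n, (1 - y ^ (i + 1))

lemma mixedProd_zero_zero (y : R) (n : ℕ) :
    mixedProd y 0 0 n = ∏ i ∈ range n, (1 - y ^ (i + 1)) := by
  simp [mixedProd]

lemma mixedProd_self_right (y : R) (a n : ℕ) :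
    mixedProd y a n n = ∏ i ∈ range a, (1 + y ^ (i + 1)) := by
  simp [mixedProd]

lemma mixedProd_succ_left (y : R) (a b n : ℕ) :
    mixedProd y (a + 1) b n = mixedProd y a b n * (1 + y ^ (a + 1)) := by
  rw [mixedProd, mixedProd, prod_range_succ, mul_right_comm]

lemma mixedProd_eq_mul_one_sub_pow (y : R) (a : ℕ) {b n : ℕ} (h : b < n) :
    mixedProd y a b n = mixedProd y a (b + 1) n * (1 - y ^ (b + 1)) := by
  rw [mixedProd, mixedProd, prod_eq_prod_Ico_succ_bot h, mul_assoc, mul_comm (∏ i ∈ Ico _ _, _)]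

lemma mixedProd_succ_right (y : R) (a : ℕ) {b n : ℕ} (h : b ≤ n) :
    mixedProd y a b (n + 1) = mixedProd y a b n * (1 - y ^ (n + 1)) := by
  rw [mixedProd, mixedProd, prod_Ico_succ_top h, mul_assoc]

lemma sum_mixedProd_telescope (y : R) (n : ℕ) :
    ∑ s ∈ range n, (-1) ^ s * mixedProd y s (s + 1) n * y ^ ((s + 1) * (n + 1)) *
        ((1 - y ^ (s + 1)) + y ^ (n + 1) * (1 + y ^ (s + 1))) =
      mixedProd y 0 0 n * y ^ (n + 1) - (-1) ^ n * mixedProd y n n n * y ^ ((n + 1) ^ 2) := by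
  have key := sum_range_sub' (fun s ↦ (-1) ^ s * mixedProd y s s n * y ^ ((s + 1) * (n + 1))) n
  rw [zero_add, one_mul, pow_zero, one_mul, ← sq] at key
  rw [← key]
  refine sum_congr rfl fun s hs ↦ ?_
  rw [mixedProd_succ_left, mixedProd_eq_mul_one_sub_pow y s (mem_range.mp hs)]
  ring

/-- Shanks's finite form of Gauss's identity `∏ (1 + yⁱ) · ∑ (-1)ˢ y^(s²) = ∏ (1 - yⁱ)`. -/
lemma prod_mul_sum_pow_sq (y : R) (n : ℕ) :
    (∏ i ∈ range n, (1 + y ^ (i + 1))) *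
        (1 + 2 * ∑ s ∈ range n, (-1) ^ (s + 1) * y ^ ((s + 1) ^ 2)) =
      ∏ i ∈ range n, (1 - y ^ (i + 1)) +
        2 * ∑ s ∈ range n, (-1) ^ (s + 1) * mixedProd y s (s + 1) n * y ^ ((s + 1) * (n + 1)) := by
  induction n with
  | zero => simp
  | succ n ih =>
    have telescope := sum_mixedProd_telescope y n
    have remainder : ∑ s ∈ range n, (-1) ^ (s + 1) * mixedProd y s (s + 1) (n + 1) *
          y ^ ((s + 1) * (n + 1 + 1)) =
        (1 + y ^ (n + 1)) *
            ∑ s ∈ range n, (-1) ^ (s + 1) * mixedProd y s (s + 1) n * y ^ ((s + 1) * (n + 1)) +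
          ∑ s ∈ range n, (-1) ^ s * mixedProd y s (s + 1) n * y ^ ((s + 1) * (n + 1)) *
            ((1 - y ^ (s + 1)) + y ^ (n + 1) * (1 + y ^ (s + 1))) := by
      rw [mul_sum, ← sum_add_distrib]
      refine sum_congr rfl fun s hs ↦ ?_
      rw [mixedProd_succ_right y s (mem_range.mp hs)]
      ring
    rw [mixedProd_zero_zero, mixedProd_self_right] at telescope
    rw [sum_range_succ, sum_range_succ, prod_range_succ, prod_range_succ, remainder, telescope,
      mixedProd_self_right]
    linear_combination (1 + y ^ (n + 1)) * ih

lemma pow_dvd_prod_mul_sum_pow_sq_sub_prod (y : R) (n : ℕ) :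
    y ^ n ∣ (∏ i ∈ range n, (1 + y ^ (i + 1))) *
        (1 + 2 * ∑ s ∈ range n, (-1) ^ (s + 1) * y ^ ((s + 1) ^ 2)) -
      ∏ i ∈ range n, (1 - y ^ (i + 1)) := by
  rw [prod_mul_sum_pow_sq, add_sub_cancel_left]
  exact (dvd_sum fun s _ ↦ (pow_dvd_pow y (by nlinarith)).mul_left _).mul_left _

end ShanksIdentity

section GaussIdentity

variable (R : Type*) [CommRing R]

/-- The power series `∑_{k ≥ 1} (-1)ᵏ X^(k²)`. The sign is recorded as `(-1)^n` with `n = k²`,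
which has the parity of `k`. -/
noncomputable def alternatingSquares : R⟦X⟧ :=
  open Classical in mk fun n ↦ if 0 < n ∧ IsSquare n then (-1) ^ n else 0

variable {R}

lemma isSquare_of_coeff_alternatingSquares_ne_zero {n : ℕ}
    (h : coeff n (alternatingSquares R) ≠ 0) : IsSquare n := by
  rw [alternatingSquares, coeff_mk] at h
  exact (ite_ne_right_iff.mp h).1.2

lemma coeff_sq_alternatingSquares (k : ℕ) :
    coeff ((k + 1) ^ 2) (alternatingSquares R) = (-1) ^ (k + 1) := by
  have parity : Even ((k + 1) ^ 2) ↔ Even (k + 1) := Nat.even_pow' two_ne_zero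
  rw [alternatingSquares, coeff_mk, if_pos ⟨by positivity, IsSquare.sq _⟩]
  exact neg_one_pow_congr parity

lemma tendsto_zero_of_X_pow_dvd [TopologicalSpace R] {f : ℕ → R⟦X⟧} (h : ∀ n, X ^ n ∣ f n) :
    Tendsto f atTop (𝓝 0) := by
  rw [WithPiTopology.tendsto_iff_coeff_tendsto]
  exact fun d ↦ tendsto_atTop_of_eventually_const (i₀ := d + 1) fun n hn ↦
    X_pow_dvd_iff.mp (h n) d hn

lemma hasSum_alternatingSquares [TopologicalSpace R] :
    HasSum (fun k : ℕ ↦ (-1) ^ (k + 1) * (X : R⟦X⟧) ^ ((k + 1) ^ 2)) (alternatingSquares R) := by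
  have injective_succ_sq : Function.Injective fun k : ℕ ↦ (k + 1) ^ 2 := fun a b h ↦
    Nat.succ_injective (Nat.pow_left_injective two_ne_zero h)
  have monomials := hasSum_of_monomials_self (alternatingSquares R)
  rw [← injective_succ_sq.hasSum_iff] at monomials
  · simpa [Function.comp_def, coeff_sq_alternatingSquares, monomial_eq_C_mul_X_pow]
      using monomials
  · intro n hn
    suffices coeff n (alternatingSquares R) = 0 by rw [this, map_zero]
    rw [alternatingSquares, coeff_mk, if_neg]
    rintro ⟨hpos, k, rfl⟩
    have sub_add : k - 1 + 1 = k := Nat.sub_add_cancel (Nat.pos_of_mul_pos_left hpos)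
    exact hn ⟨k - 1, by simp only [sub_add, sq]⟩

lemma mul_one_add_two_alternatingSquares_of_hasProd [TopologicalSpace R]
    [IsTopologicalRing R] [T2Space R]
    {G E : R⟦X⟧} (hG : HasProd (fun i ↦ 1 + X ^ (i + 1)) G)
    (hE : HasProd (fun i ↦ 1 - X ^ (i + 1)) E) :
    G * (1 + 2 * alternatingSquares R) = E := by
  have partialSums := (hasSum_alternatingSquares (R := R)).tendsto_sum_nat
  have difference := (hG.tendsto_prod_nat.mul ((partialSums.const_mul 2).const_add 1)).sub
    hE.tendsto_prod_nat
  exact sub_eq_zero.mp (tendsto_nhds_unique difference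
    (tendsto_zero_of_X_pow_dvd (pow_dvd_prod_mul_sum_pow_sq_sub_prod X)))

end GaussIdentity

section GeneratingFunctions

/-- The number of overpartitions of `n` all of whose parts satisfy `p`, encoded as in
`regularOverpartitions`. -/
def overpartitionCount (p : ℕ → Prop) [DecidablePred p] (n : ℕ) : ℕ :=
  ∑ m ∈ range (n + 1),
    #{lam ∈ Nat.Partition.distincts m | ∀ i ∈ lam.parts, p i} *
      #(Nat.Partition.restricted (n - m) p)

variable (R : Type*) [CommSemiring R] (p : ℕ → Prop) [DecidablePred p]

/-- The generating function of partitions into distinct parts satisfying `p`. -/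
noncomputable def distinctGenFun : R⟦X⟧ :=
  mk fun n ↦ (#{lam ∈ Nat.Partition.distincts n | ∀ i ∈ lam.parts, p i} : R)

/-- The generating function of partitions into parts satisfying `p`. -/
noncomputable def restrictedGenFun : R⟦X⟧ :=
  mk fun n ↦ (#(Nat.Partition.restricted n p) : R)

/-- The generating function of overpartitions into parts satisfying `p`. -/
noncomputable def overpartitionGenFun : R⟦X⟧ :=
  mk fun n ↦ (overpartitionCount p n : R)

lemma overpartitionGenFun_eq_mul :
    overpartitionGenFun R p = distinctGenFun R p * restrictedGenFun R p := by
  ext n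
  rw [coeff_mul, Nat.sum_antidiagonal_eq_sum_range_succ_mk]
  simp [overpartitionGenFun, overpartitionCount, distinctGenFun, restrictedGenFun]

lemma map_overpartitionGenFun {S : Type*} [CommSemiring S] (f : R →+* S) :
    (overpartitionGenFun R p).map f = overpartitionGenFun S p := by
  ext n
  simp [overpartitionGenFun]

lemma coeff_overpartitionGenFun_eq_zero_of_not_dvd {d n : ℕ} (hp : ∀ i, p i → d ∣ i)
    (hn : ¬ d ∣ n) : coeff n (overpartitionGenFun R p) = 0 := by
  have dvd_size {m : ℕ} (lam : Nat.Partition m) (h : ∀ i ∈ lam.parts, p i) : d ∣ m := by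
    rw [← lam.parts_sum]
    exact Multiset.dvd_sum fun i hi ↦ hp i (h i hi)
  suffices overpartitionCount p n = 0 by rw [overpartitionGenFun, coeff_mk, this, Nat.cast_zero]
  refine sum_eq_zero fun m hm ↦ ?_
  rw [mul_eq_zero, card_eq_zero, card_eq_zero]
  by_contra! h
  obtain ⟨⟨lam, hlam⟩, mu, hmu⟩ := h
  have dvd_add := (dvd_size lam (mem_filter.mp hlam).2).add (dvd_size mu (mem_filter.mp hmu).2)
  rw [Nat.add_sub_cancel' (mem_range_succ_iff.mp hm)] at dvd_add
  exact hn dvd_add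

section Topology

variable [TopologicalSpace R] [T2Space R]

lemma hasProd_distinctGenFun :
    HasProd (fun i ↦ if p (i + 1) then 1 + X ^ (i + 1) else 1) (distinctGenFun R p) := by
  convert! Nat.Partition.hasProd_genFun (fun i c ↦ if c < 2 ∧ p i then (1 : R) else 0) using 1
  · ext1 i
    rw [tsum_eq_single 0 fun c hc ↦ by simp [hc]]
    split_ifs <;> simp_all
  · ext n
    rw [Nat.Partition.coeff_genFun, distinctGenFun, coeff_mk, ← Nat.Partition.countRestricted_two]
    simp_rw [Nat.Partition.countRestricted, filter_filter, card_filter, Finsupp.prod, prod_boole]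
    simp [forall_and]

variable [IsTopologicalSemiring R]

lemma hasProd_overpartitionGenFun :
    HasProd (fun i ↦ if p (i + 1) then (1 + X ^ (i + 1)) * ∑' j : ℕ, X ^ ((i + 1) * j) else 1)
      (overpartitionGenFun R p) := by
  rw [overpartitionGenFun_eq_mul]
  convert! (hasProd_distinctGenFun R p).mul
    (Nat.Partition.hasProd_powerSeriesMk_card_restricted R p) using 2
  split_ifs <;> simp

end Topology

lemma overpartitionGenFun_mul_overpartitionGenFun_not :
    overpartitionGenFun R p * overpartitionGenFun R (¬ p ·) =
      overpartitionGenFun R fun _ ↦ True := by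
  let _ : TopologicalSpace R := ⊥
  have _ : DiscreteTopology R := ⟨rfl⟩
  refine ((hasProd_overpartitionGenFun R p).mul
    (hasProd_overpartitionGenFun R (¬ p ·))).unique ?_
  convert! hasProd_overpartitionGenFun R fun _ ↦ True using 2
  split_ifs <;> simp_all

end GeneratingFunctions

section GeneratingFunctionIdentities

variable (R : Type*) [CommRing R]

lemma overpartitionGenFun_true_mul_one_add_two_alternatingSquares :
    overpartitionGenFun R (fun _ ↦ True) * (1 + 2 * alternatingSquares R) = 1 := by
  let _ : TopologicalSpace R := ⊥
  have _ : DiscreteTopology R := ⟨rfl⟩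
  have distinct : HasProd (fun i ↦ 1 + X ^ (i + 1)) (distinctGenFun R fun _ ↦ True) := by
    simpa using hasProd_distinctGenFun R fun _ ↦ True
  have euler := (WithPiTopology.multipliable_one_sub_X_pow R).hasProd
  have gauss := mul_one_add_two_alternatingSquares_of_hasProd distinct euler
  rw [overpartitionGenFun_eq_mul, mul_right_comm, gauss, mul_comm]
  refine ((Nat.Partition.hasProd_powerSeriesMk_card_restricted R fun _ ↦ True).mul euler).unique ?_
  convert! hasProd_one using 2 with i
  simp_rw [if_true, pow_mul]
  exact WithPiTopology.tsum_pow_mul_one_sub_of_constantCoeff_eq_zero (by simp)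

lemma overpartitionGenFun_eq_one_of_charTwo [CharP R 2] (p : ℕ → Prop) [DecidablePred p] :
    overpartitionGenFun R p = 1 := by
  let _ : TopologicalSpace R := ⊥
  have _ : DiscreteTopology R := ⟨rfl⟩
  refine (hasProd_overpartitionGenFun R p).unique ?_
  convert! hasProd_one using 2 with i
  have _ : CharP R⟦X⟧ 2 := charP_of_injective_ringHom C_injective 2
  rw [ite_eq_right_iff]
  intro
  simp_rw [pow_mul]
  rw [mul_comm, ← CharTwo.sub_eq_add]
  exact WithPiTopology.tsum_pow_mul_one_sub_of_constantCoeff_eq_zero (by simp)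

end GeneratingFunctionIdentities

section IntegerPowerSeries

lemma natCast_dvd_iff_map_castRingHom_eq_zero (n : ℕ) (f : ℤ⟦X⟧) :
    (n : ℤ⟦X⟧) ∣ f ↔ f.map (Int.castRingHom (ZMod n)) = 0 := by
  rw [PowerSeries.ext_iff]
  simp only [coeff_map, eq_intCast, map_zero, ZMod.intCast_zmod_eq_zero_iff_dvd]
  constructor
  · rintro ⟨g, rfl⟩ d
    rw [← nsmul_eq_mul, map_nsmul, nsmul_eq_mul]
    exact dvd_mul_right _ _
  · intro h
    choose g hg using fun d ↦ h d
    exact ⟨mk g, by ext d; rw [← nsmul_eq_mul, map_nsmul, nsmul_eq_mul, coeff_mk, hg]⟩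

lemma prime_dvd_pow_sub_expand (p : ℕ) [Fact p.Prime] (f : ℤ⟦X⟧) :
    (p : ℤ⟦X⟧) ∣ f ^ p - expand p (NeZero.ne p) f := by
  rw [natCast_dvd_iff_map_castRingHom_eq_zero, map_sub, map_pow, sub_eq_zero, map_expand]
  have frobenius_expand := MvPowerSeries.map_frobenius_expand p (NeZero.ne p)
    (f := f.map (Int.castRingHom (ZMod p)))
  rw [ZMod.frobenius_zmod, MvPowerSeries.map_id] at frobenius_expand
  exact frobenius_expand.symm

lemma two_dvd_overpartitionGenFun_sub_one (p : ℕ → Prop) [DecidablePred p] :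
    2 ∣ overpartitionGenFun ℤ p - 1 := by
  rw [← Nat.cast_two, natCast_dvd_iff_map_castRingHom_eq_zero, map_sub, map_overpartitionGenFun,
    overpartitionGenFun_eq_one_of_charTwo, map_one, sub_self]

end IntegerPowerSeries

section ResiduesOfExponents

variable {R : Type*} [Semiring R] {m i j : ℕ} {f g : R⟦X⟧}

/-- Every exponent occurring in `f` has residue at most `i` modulo `m`. -/
def HasResiduesLE (m i : ℕ) (f : R⟦X⟧) : Prop :=
  ∀ n, i < n % m → coeff n f = 0

lemma HasResiduesLE.mul (hf : HasResiduesLE m i f) (hg : HasResiduesLE m j g) :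
    HasResiduesLE m (i + j) (f * g) := by
  intro n hn
  rw [coeff_mul]
  refine sum_eq_zero fun ⟨a, b⟩ hab ↦ ?_
  rw [HasAntidiagonal.mem_antidiagonal] at hab
  have mod_le : n % m ≤ a % m + b % m := by
    rw [← hab, Nat.add_mod]
    exact Nat.mod_le _ _
  rcases lt_or_ge i (a % m) with ha | ha
  · rw [hf a ha, zero_mul]
  · rw [hg b (by omega), mul_zero]

lemma HasResiduesLE.pow (hf : HasResiduesLE m i f) (n : ℕ) : HasResiduesLE m (n * i) (f ^ n) := by
  induction n with
  | zero =>
    intro d hd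
    rw [pow_zero, coeff_one, if_neg]
    rintro rfl
    simp at hd
  | succ n ih =>
    rw [pow_succ, Nat.succ_mul]
    exact ih.mul hf

lemma hasResiduesLE_alternatingSquares {R : Type*} [CommRing R] :
    HasResiduesLE 4 1 (alternatingSquares R) := by
  intro n hn
  by_contra h
  obtain ⟨k, rfl⟩ := isSquare_of_coeff_alternatingSquares_ne_zero h
  rw [Nat.mul_mod] at hn
  have : k % 4 < 4 := Nat.mod_lt _ (by norm_num)
  interval_cases k % 4 <;> simp at hn

lemma hasResiduesLE_overpartitionGenFun {R : Type*} [CommSemiring R] (p : ℕ → Prop)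
    [DecidablePred p] (hp : ∀ i, p i → m ∣ i) : HasResiduesLE m 0 (overpartitionGenFun R p) :=
  fun _ hn ↦ coeff_overpartitionGenFun_eq_zero_of_not_dvd R p hp fun h ↦
    hn.ne' (Nat.mod_eq_zero_of_dvd h)

end ResiduesOfExponents

section CongruenceModSixteen

lemma sixteen_dvd_sub_of_mul_one_add_two_mul_eq_one {R : Type*} [CommRing R] {P W s t : R}
    (inverse : P * W * (1 + 2 * s) = 1) (hW : 2 ∣ W - 1) (hst : 2 ∣ s ^ 2 - t) :
    16 ∣ P - (W ^ 7 * (1 - 2 * s + 4 * s ^ 2) - 8 * (s * t)) := by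
  obtain ⟨u, hu⟩ := hst
  obtain ⟨v, hv⟩ : 2 ∣ W ^ 7 - 1 := by simpa using hW.trans (sub_dvd_pow_sub_pow W 1 7)
  obtain ⟨w, hw⟩ : 16 ∣ W ^ 8 - 1 := by
    have := dvd_sub_pow_of_dvd_sub (R := R) (p := 2) (by exact_mod_cast hW) 3
    norm_num at this
    exact this
  refine ⟨P * W ^ 8 * s ^ 4 - P * w - s ^ 3 * v - s * u, ?_⟩
  linear_combination (W ^ 7 * (1 - 2 * s + 4 * s ^ 2 - 8 * s ^ 3)) * inverse - P * hw
    - 8 * s ^ 3 * hv - 8 * s * hu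

lemma coeff_alternatingSquares_mul_expand_two_eq_zero {R : Type*} [CommRing R] {n : ℕ}
    (hn : ∀ a b : ℕ, n ≠ a ^ 2 + 2 * b ^ 2) :
    coeff n (alternatingSquares R * expand 2 two_ne_zero (alternatingSquares R)) = 0 := by
  rw [coeff_mul]
  refine sum_eq_zero fun ⟨k, l⟩ hkl ↦ ?_
  by_contra h
  obtain ⟨a, rfl⟩ := isSquare_of_coeff_alternatingSquares_ne_zero (left_ne_zero_of_mul h)
  have right_ne_zero := right_ne_zero_of_mul h
  rw [coeff_expand, ite_ne_right_iff] at right_ne_zero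
  obtain ⟨⟨c, rfl⟩, hc⟩ := right_ne_zero
  rw [Nat.mul_div_cancel_left _ two_pos] at hc
  obtain ⟨b, rfl⟩ := isSquare_of_coeff_alternatingSquares_ne_zero hc
  exact hn a b (by rw [sq, sq, HasAntidiagonal.mem_antidiagonal.mp hkl])

theorem sixteen_dvd_overpartitionCount (p : ℕ → Prop) [DecidablePred p]
    (hp : ∀ i, ¬ p i → 4 ∣ i) {n : ℕ} (hmod : n % 4 = 3)
    (hn : ∀ a b : ℕ, n ≠ a ^ 2 + 2 * b ^ 2) : 16 ∣ overpartitionCount p n := by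
  set s := alternatingSquares ℤ
  set W := overpartitionGenFun ℤ (¬ p ·)
  have inverse : overpartitionGenFun ℤ p * W * (1 + 2 * s) = 1 := by
    rw [overpartitionGenFun_mul_overpartitionGenFun_not,
      overpartitionGenFun_true_mul_one_add_two_alternatingSquares]
  obtain ⟨g, hg⟩ := sixteen_dvd_sub_of_mul_one_add_two_mul_eq_one inverse
    (two_dvd_overpartitionGenFun_sub_one _) (prime_dvd_pow_sub_expand 2 s)
  have residues_s : HasResiduesLE 4 1 s := hasResiduesLE_alternatingSquares
  have residues_W : HasResiduesLE 4 0 (W ^ 7) := (hasResiduesLE_overpartitionGenFun _ hp).pow 7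
  have coeff_W : coeff n (W ^ 7) = 0 := residues_W n (by omega)
  have coeff_W_mul_s : coeff n (W ^ 7 * s) = 0 := residues_W.mul residues_s n (by omega)
  have coeff_W_mul_s_sq : coeff n (W ^ 7 * s ^ 2) = 0 :=
    residues_W.mul (residues_s.pow 2) n (by omega)
  have coeff_s_mul_expand := coeff_alternatingSquares_mul_expand_two_eq_zero (R := ℤ) hn
  have expansion : overpartitionGenFun ℤ p = W ^ 7 - (2 : ℤ) • (W ^ 7 * s) +
      (4 : ℤ) • (W ^ 7 * s ^ 2) - (8 : ℤ) • (s * expand 2 two_ne_zero s) + (16 : ℤ) • g := by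
    simp only [zsmul_eq_mul]
    push_cast
    linear_combination hg
  have coeff_eq := congrArg (coeff n) expansion
  simp only [map_add, map_sub, map_zsmul, coeff_W, coeff_W_mul_s, coeff_W_mul_s_sq,
    coeff_s_mul_expand, s, mul_zero, sub_zero, zero_add, smul_eq_mul, overpartitionGenFun,
    coeff_mk] at coeff_eq
  exact Int.natCast_dvd_natCast.mp ⟨coeff n g, coeff_eq⟩

theorem sixteen_dvd_regularOverpartitions {j k : ℕ} (hj : 4 ∣ j) (hk : 4 ∣ k) {n : ℕ}
    (hmod : n % 4 = 3) (hn : ∀ a b : ℕ, n ≠ a ^ 2 + 2 * b ^ 2) :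
    16 ∣ regularOverpartitions j k n :=
  sixteen_dvd_overpartitionCount (· % k ≠ j)
    (fun _ h ↦ (Nat.dvd_mod_iff hk).mp (not_not.mp h ▸ hj)) hmod hn

end CongruenceModSixteen

section BinaryForms

variable {p d : ℕ} [Fact p.Prime]

lemma dvd_and_dvd_of_dvd_sq_add_mul_sq (hd : ¬ IsSquare (-d : ZMod p)) {a b : ℕ}
    (h : p ∣ a ^ 2 + d * b ^ 2) : p ∣ a ∧ p ∣ b := by
  simp only [← ZMod.natCast_eq_zero_iff] at h ⊢
  push_cast at h
  have hb : (b : ZMod p) = 0 := by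
    by_contra hb
    refine hd ⟨a / b, ?_⟩
    field_simp
    linear_combination -h
  exact ⟨by simpa [hb] using h, hb⟩

lemma odd_pow_mul_ne_sq_add_mul_sq (hd : ¬ IsSquare (-d : ZMod p)) {m : ℕ} (hm : ¬ p ∣ m)
    (e a b : ℕ) : p ^ (2 * e + 1) * m ≠ a ^ 2 + d * b ^ 2 := by
  have p_pos : 0 < p := Fact.out (p := p.Prime).pos
  induction e generalizing a b with
  | zero =>
    intro h
    have p_dvd : p ∣ a ^ 2 + d * b ^ 2 := ⟨m, by rw [← h]; ring⟩
    obtain ⟨⟨a, rfl⟩, ⟨b, rfl⟩⟩ := dvd_and_dvd_of_dvd_sq_add_mul_sq hd p_dvd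
    exact hm ⟨a ^ 2 + d * b ^ 2, Nat.eq_of_mul_eq_mul_left p_pos (by linear_combination h)⟩
  | succ e ih =>
    intro h
    have p_dvd : p ∣ a ^ 2 + d * b ^ 2 := ⟨p ^ (2 * e + 2) * m, by rw [← h]; ring⟩
    obtain ⟨⟨a, rfl⟩, ⟨b, rfl⟩⟩ := dvd_and_dvd_of_dvd_sq_add_mul_sq hd p_dvd
    exact ih a b (Nat.eq_of_mul_eq_mul_left (pow_pos p_pos 2) (by linear_combination h))

end BinaryForms

lemma pow_two_mul_modEq_one_of_odd {a : ℕ} (ha : Odd a) (e : ℕ) : a ^ (2 * e) ≡ 1 [MOD 8] := by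
  have sq_modEq : a ^ 2 ≡ 1 [MOD 8] :=
    ((Nat.modEq_iff_dvd' (Nat.one_le_pow _ _ ha.pos)).mpr (Nat.eight_dvd_sq_sub_one_of_odd ha)).symm
  simpa only [pow_mul, one_pow] using sq_modEq.pow e

theorem sixteen_dvd_regularOverpartitions_odd_pow_mul_even_pow_mul {j k : ℕ} (hj : 4 ∣ j)
    (hk : 4 ∣ k) {p q m : ℕ} (hp : p.Prime) (hsq : ¬ IsSquare (-2 : ZMod p)) (hq : Odd q)
    (hpq : ¬ p ∣ q) (hpm : ¬ p ∣ m) (hmod : p * m % 4 = 3) (e f : ℕ) :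
    16 ∣ regularOverpartitions j k (p ^ (2 * e + 1) * (q ^ (2 * f) * m)) := by
  have := Fact.mk hp
  have not_dvd : ¬ p ∣ q ^ (2 * f) * m :=
    hp.prime.not_dvd_mul (mt hp.dvd_of_dvd_pow hpq) hpm
  have odd_p : Odd p := Nat.Odd.of_mul_left (Nat.odd_iff.mpr (by omega) : Odd (p * m))
  have mod_eight : p ^ (2 * e + 1) * (q ^ (2 * f) * m) ≡ p * m [MOD 8] := by
    simpa [pow_succ, mul_assoc] using
      (pow_two_mul_modEq_one_of_odd odd_p e).mul_right p |>.mul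
        ((pow_two_mul_modEq_one_of_odd hq f).mul_right m)
  exact sixteen_dvd_regularOverpartitions hj hk
    (Eq.trans (mod_eight.of_dvd (by norm_num : 4 ∣ 8)) hmod)
    (odd_pow_mul_ne_sq_add_mul_sq (d := 2) (by exact_mod_cast hsq) not_dvd e)

theorem stmt_19 (n α β : ℕ) (j : ℕ) (hj : j ∈ ({0, 2, 3, 4} : Finset ℕ))
    (k : ℕ) (hk : k ∈ ({0, 1, 3, 4, 5, 6} : Finset ℕ)) :
    16 ∣ regularOverpartitions 8 16
        (8 * 5 ^ (2 * α + 1) * 7 ^ (2 * β) * (5 * n + j)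
          + 7 * 5 ^ (2 * α + 1) * 7 ^ (2 * β)) ∧
    16 ∣ regularOverpartitions 8 16
        (8 * 5 ^ (2 * α) * 7 ^ (2 * β + 1) * (7 * n + k)
          + 5 * 5 ^ (2 * α) * 7 ^ (2 * β + 1)) := by
  simp only [Finset.mem_insert, Finset.mem_singleton] at hj hk
  have not_isSquare_five : ¬ IsSquare (-2 : ZMod 5) := by decide
  have not_isSquare_seven : ¬ IsSquare (-2 : ZMod 7) := by decide
  have not_five_dvd : ¬ 5 ∣ 8 * (5 * n + j) + 7 := by omega
  have not_seven_dvd : ¬ 7 ∣ 8 * (7 * n + k) + 5 := by omega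
  constructor
  · convert! sixteen_dvd_regularOverpartitions_odd_pow_mul_even_pow_mul (j := 8) (k := 16) (q := 7)
      (by decide) (by decide) Nat.prime_five not_isSquare_five (by decide) (by decide)
      not_five_dvd (by omega) α β using 2
    ring
  · convert! sixteen_dvd_regularOverpartitions_odd_pow_mul_even_pow_mul (j := 8) (k := 16) (q := 5)
      (by decide) (by decide) Nat.prime_seven not_isSquare_seven (by decide) (by decide)
      not_seven_dvd (by omega) β α using 2
    ring
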